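/- arXiv:2507.20432 — 2 statements merged into one kernel-verified Lean document; each statement's English description precedes it below -/
import Mathlib

section
/- For every integer n ≥ 2, the inequality (n² − 3n + 2)·M_1(n) − 8·M_2(n) ≥ 0 holds, with equality if and only if n is prime. -/
/-- The generalized MacMahon partition function `M_a(n)`: the sum of
`m_1 ⋯ m_a` over all tuples of positive integers `0 < s_1 < ⋯ < s_a` and
`m_1, …, m_a > 0` with `n = m_1 s_1 + ⋯ + m_a s_a`.  (All such solutions
satisfy `m_i, s_i ∈ [1, n]`, so the finite range below captures them all.) -/
def MacMahonM (a n : ℕ) : ℕ :=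
  ∑ p ∈ (Fintype.piFinset (fun _ : Fin a => Finset.Icc 1 n) ×ˢ
          Fintype.piFinset (fun _ : Fin a => Finset.Icc 1 n)).filter
      (fun p => (∀ i j : Fin a, i < j → p.2 i < p.2 j) ∧ ∑ i, p.1 i * p.2 i = n),
    ∏ i, p.1 i

/-!
Dropping the order condition `s₁ < s₂` from `M₂(n)` leaves a sum over all positive solutions of
`m₁ s₁ + m₂ s₂ = n`, which is symmetric in the indices and in `m ↔ s`. The Euclidean step
`(m₁, m₂; s₁, s₂) ↦ (m₁, m₁ + m₂; s₁ - s₂, s₂)` for `s₂ < s₁`, together with its mirror image for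
`s₁ < s₂`, matches the solutions with `s₁ ≠ s₂` with those with `m₁ ≠ m₂`. It turns
`a² - ab + b²` into `a² + ab + b²`, so comparing the sums of these two forms evaluates `2 ∑ m₁ m₂`
by the diagonal terms alone (Liouville's method), and `8 M₂(n) = σ₃(n) + (1 - 2n) σ₁(n)` follows.
The quantity of the theorem is therefore `∑_{d ∣ n} d (n² - n + 1 - d²)`. The terms `d = 1` and
`d = n` cancel, while every other term is positive.
-/

open Finset ArithmeticFunction.sigma

theorem sum_filter_lt_add_gt_add_eq {ι α M : Type*} [LinearOrder α] [AddCommMonoid M]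
    (s : Finset ι) (u v : ι → α) (f : ι → M) :
    ∑ i ∈ s with u i < v i, f i + ∑ i ∈ s with v i < u i, f i + ∑ i ∈ s with u i = v i, f i =
      ∑ i ∈ s, f i := by
  simp only [sum_filter, ← sum_add_distrib]
  refine sum_congr rfl fun i _ ↦ ?_
  rcases lt_trichotomy (u i) (v i) with h | h | h
  · simp [h, h.not_gt, h.ne]
  · simp [h]
  · simp [h, h.not_gt, h.ne']

theorem six_mul_sum_range_mul_sub {R : Type*} [CommRing R] (c : R) (d : ℕ) :
    6 * ∑ a ∈ range d, (a : R) * (c - a) = d * (d - 1) * (3 * c - 2 * d + 1) := by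
  induction d with
  | zero => simp
  | succ k ih => rw [sum_range_succ, mul_add, ih]; push_cast; ring

theorem six_mul_sum_Ico_mul_sub {R : Type*} [CommRing R] (d : ℕ) :
    6 * ∑ a ∈ Ico 1 d, (a : R) * ((d - a : ℕ) : R) = (d : R) ^ 3 - d := by
  have hcast : ∀ a ∈ range d, (a : R) * ((d - a : ℕ) : R) = a * ((d : R) - a) := fun a ha ↦ by
    rw [Nat.cast_sub (mem_range.1 ha).le]
  have hzero : ∀ a ∈ range d, a ∉ Ico 1 d → (a : R) * ((d - a : ℕ) : R) = 0 := by
    intro a ha ha'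
    have : a = 0 := by simp only [mem_range, mem_Ico] at ha ha'; omega
    simp [this]
  rw [sum_subset (fun a ha ↦ mem_range.2 (mem_Ico.1 ha).2) hzero, sum_congr rfl hcast,
    six_mul_sum_range_mul_sub]
  ring

/-- The solutions `((m₁, m₂), (s₁, s₂))` in positive integers of `m₁ s₁ + m₂ s₂ = n`. These are the
pairs over which `M₂(n)` is summed, except that `s₁` and `s₂` come in any order; as in `MacMahonM`,
all four entries of a solution lie in `[1, n]`. -/
def pairSolutions (n : ℕ) : Finset ((ℕ × ℕ) × (ℕ × ℕ)) :=
  {p ∈ (Icc 1 n ×ˢ Icc 1 n) ×ˢ (Icc 1 n ×ˢ Icc 1 n) | p.1.1 * p.2.1 + p.1.2 * p.2.2 = n}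

theorem mem_pairSolutions {n : ℕ} {p : (ℕ × ℕ) × (ℕ × ℕ)} :
    p ∈ pairSolutions n ↔ (0 < p.1.1 ∧ 0 < p.1.2) ∧ (0 < p.2.1 ∧ 0 < p.2.2) ∧
      p.1.1 * p.2.1 + p.1.2 * p.2.2 = n := by
  obtain ⟨⟨a, b⟩, x, y⟩ := p
  simp only [pairSolutions, mem_filter, mem_product, mem_Icc]
  constructor
  · rintro ⟨_, h⟩
    refine ⟨?_, ?_, h⟩ <;> omega
  · rintro ⟨⟨ha, hb⟩, ⟨hx, hy⟩, h⟩
    have := Nat.le_mul_of_pos_right a hx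
    have := Nat.le_mul_of_pos_left x ha
    have := Nat.le_mul_of_pos_right b hy
    have := Nat.le_mul_of_pos_left y hb
    refine ⟨?_, h⟩
    omega

section AddCommMonoid

variable {M : Type*} [AddCommMonoid M] (n : ℕ) (f : (ℕ × ℕ) × (ℕ × ℕ) → M)

theorem sum_pairSolutions_swap :
    ∑ p ∈ pairSolutions n, f p.swap = ∑ p ∈ pairSolutions n, f p := by
  refine sum_equiv (Equiv.prodComm _ _) (fun p ↦ ?_) fun _ _ ↦ rfl
  simp only [mem_pairSolutions, Equiv.prodComm_apply, Prod.fst_swap, Prod.snd_swap]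
  grind

theorem sum_pairSolutions_map_swap :
    ∑ p ∈ pairSolutions n, f (p.1.swap, p.2.swap) = ∑ p ∈ pairSolutions n, f p := by
  refine sum_equiv ((Equiv.prodComm _ _).prodCongr (Equiv.prodComm _ _)) (fun p ↦ ?_)
    fun _ _ ↦ rfl
  simp only [mem_pairSolutions, Equiv.prodCongr_apply, Prod.map, Equiv.prodComm_apply,
    Prod.fst_swap, Prod.snd_swap]
  grind

theorem sum_pairSolutions_fst_lt :
    ∑ p ∈ pairSolutions n with p.1.1 < p.1.2, f p =
      ∑ p ∈ pairSolutions n with p.2.2 < p.2.1,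
        f ((p.1.1, p.1.1 + p.1.2), (p.2.1 - p.2.2, p.2.2)) := by
  refine sum_bij' (fun p _ ↦ ((p.1.1, p.1.2 - p.1.1), (p.2.1 + p.2.2, p.2.2)))
    (fun p _ ↦ ((p.1.1, p.1.1 + p.1.2), (p.2.1 - p.2.2, p.2.2))) ?_ ?_ ?_ ?_ ?_ <;>
    rintro ⟨⟨a, b⟩, x, y⟩ hp <;> simp only [mem_filter, mem_pairSolutions] at hp ⊢
  · obtain ⟨⟨⟨ha, hb⟩, ⟨hx, hy⟩, h⟩, hab⟩ := hp
    obtain ⟨c, rfl⟩ := Nat.exists_eq_add_of_le hab.le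
    refine ⟨⟨⟨ha, by omega⟩, ⟨by omega, hy⟩, ?_⟩, by omega⟩
    rw [Nat.add_sub_cancel_left, ← h]
    ring
  · obtain ⟨⟨⟨ha, hb⟩, ⟨hx, hy⟩, h⟩, hyx⟩ := hp
    obtain ⟨z, rfl⟩ := Nat.exists_eq_add_of_le hyx.le
    refine ⟨⟨⟨ha, by omega⟩, ⟨by omega, hy⟩, ?_⟩, by omega⟩
    rw [Nat.add_sub_cancel_left, ← h]
    ring
  · simp [Nat.add_sub_cancel' hp.2.le]
  · simp [Nat.sub_add_cancel hp.2.le]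
  · simp [Nat.add_sub_cancel' hp.2.le]

theorem sum_pairSolutions_fst_gt :
    ∑ p ∈ pairSolutions n with p.1.2 < p.1.1, f p =
      ∑ p ∈ pairSolutions n with p.2.1 < p.2.2,
        f ((p.1.1 + p.1.2, p.1.2), (p.2.1, p.2.2 - p.2.1)) := by
  have h := sum_pairSolutions_fst_lt n fun p ↦ f (p.1.swap, p.2.swap)
  rw [sum_filter, sum_filter, ← sum_pairSolutions_map_swap,
    ← sum_pairSolutions_map_swap n fun p ↦ ite (p.2.2 < p.2.1) _ _] at h
  simpa only [sum_filter, Prod.swap_swap, Prod.fst_swap, Prod.snd_swap, Prod.swap_prod_mk,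
    add_comm] using h

theorem sum_pairSolutions_snd_eq :
    ∑ p ∈ pairSolutions n with p.2.1 = p.2.2, f p =
      ∑ q ∈ n.divisorsAntidiagonal, ∑ a ∈ Ico 1 q.1, f ((a, q.1 - a), (q.2, q.2)) := by
  rw [sum_sigma']
  refine sum_bij' (fun p _ ↦ ⟨(p.1.1 + p.1.2, p.2.1), p.1.1⟩)
    (fun q _ ↦ ((q.2, q.1.1 - q.2), (q.1.2, q.1.2))) ?_ ?_ ?_ ?_ ?_
  · rintro ⟨⟨a, b⟩, x, y⟩ hp
    simp only [mem_filter, mem_pairSolutions] at hp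
    obtain ⟨⟨⟨ha, hb⟩, ⟨hx, _⟩, rfl⟩, rfl⟩ := hp
    simp only [mem_sigma, Nat.mem_divisorsAntidiagonal, mem_Ico]
    exact ⟨⟨add_mul a b x, by positivity⟩, ha, by omega⟩
  · rintro ⟨⟨d, e⟩, a⟩ hq
    simp only [mem_sigma, Nat.mem_divisorsAntidiagonal, mem_Ico] at hq
    obtain ⟨⟨rfl, hn⟩, ha, had⟩ := hq
    have he : 0 < e := Nat.pos_of_ne_zero (right_ne_zero_of_mul hn)
    simp only [mem_filter, mem_pairSolutions]
    exact ⟨⟨⟨ha, by omega⟩, ⟨he, he⟩, by rw [← add_mul, Nat.add_sub_cancel' had.le]⟩, trivial⟩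
  · rintro ⟨⟨a, b⟩, x, y⟩ hp
    obtain rfl : x = y := (mem_filter.1 hp).2
    simp
  · rintro ⟨⟨d, e⟩, a⟩ hq
    simp only [mem_sigma, mem_Ico] at hq
    simp [Nat.add_sub_cancel' hq.2.2.le]
  · rintro ⟨⟨a, b⟩, x, y⟩ hp
    obtain rfl : x = y := (mem_filter.1 hp).2
    simp

end AddCommMonoid

theorem sum_pairSolutions_apply_add_sub {A : Type*} [AddCommGroup A] (n : ℕ) (g : ℕ → ℕ → A)
    (hg : ∀ a b, g (a + b) b = g a (a + b)) :
    ∑ p ∈ pairSolutions n, (g p.1.1 (p.1.1 + p.1.2) - g p.1.1 p.1.2) =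
      ∑ p ∈ pairSolutions n with p.2.1 = p.2.2, g p.1.1 (p.1.1 + p.1.2) -
        ∑ p ∈ pairSolutions n with p.1.1 = p.1.2, g p.1.1 p.1.2 := by
  rw [sum_sub_distrib,
    ← sum_filter_lt_add_gt_add_eq (pairSolutions n) (fun p ↦ p.2.1) (fun p ↦ p.2.2)
      fun p ↦ g p.1.1 (p.1.1 + p.1.2),
    ← sum_filter_lt_add_gt_add_eq (pairSolutions n) (fun p ↦ p.1.1) (fun p ↦ p.1.2)
      fun p ↦ g p.1.1 p.1.2,
    sum_pairSolutions_fst_lt n fun p ↦ g p.1.1 p.1.2,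
    sum_pairSolutions_fst_gt n fun p ↦ g p.1.1 p.1.2]
  simp only [hg]
  abel

theorem six_mul_sum_pairSolutions_snd_eq_mul (n : ℕ) :
    6 * ∑ p ∈ pairSolutions n with p.2.1 = p.2.2, (p.1.1 * p.1.2 : ℤ) = σ 3 n - σ 1 n := by
  rw [sum_pairSolutions_snd_eq n fun p ↦ (p.1.1 * p.1.2 : ℤ), mul_sum]
  simp only [six_mul_sum_Ico_mul_sub]
  rw [Nat.sum_divisorsAntidiagonal fun d _ ↦ (d : ℤ) ^ 3 - d, sum_sub_distrib]
  simp [ArithmeticFunction.sigma_apply]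

theorem sum_pairSolutions_snd_eq_add_sq (n : ℕ) :
    ∑ p ∈ pairSolutions n with p.2.1 = p.2.2, ((p.1.1 : ℤ) + p.1.2) ^ 2 = σ 3 n - σ 2 n := by
  have hinner (d : ℕ) (hd : 0 < d) :
      ∑ a ∈ Ico 1 d, ((a : ℤ) + (d - a : ℕ)) ^ 2 = (d : ℤ) ^ 3 - (d : ℤ) ^ 2 := by
    have hconst : ∀ a ∈ Ico 1 d, ((a : ℤ) + (d - a : ℕ)) ^ 2 = (d : ℤ) ^ 2 := fun a ha ↦ by
      rw [← Nat.cast_add, Nat.add_sub_cancel' (mem_Ico.1 ha).2.le]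
    rw [sum_congr rfl hconst, sum_const, Nat.card_Ico, nsmul_eq_mul, Nat.cast_pred hd]
    ring
  rw [sum_pairSolutions_snd_eq n fun p ↦ ((p.1.1 : ℤ) + p.1.2) ^ 2,
    Nat.sum_divisorsAntidiagonal fun d _ ↦ ∑ a ∈ Ico 1 d, ((a : ℤ) + (d - a : ℕ)) ^ 2,
    sum_congr rfl fun d hd ↦ hinner d (Nat.pos_of_mem_divisors hd), sum_sub_distrib]
  simp [ArithmeticFunction.sigma_apply]

theorem sum_pairSolutions_fst_eq_sq (n : ℕ) :
    ∑ p ∈ pairSolutions n with p.1.1 = p.1.2, (p.1.1 : ℤ) ^ 2 = n * σ 1 n - σ 2 n := by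
  have hterm : ∀ q ∈ n.divisorsAntidiagonal,
      ∑ _a ∈ Ico 1 q.1, (q.2 : ℤ) ^ 2 = n * q.2 - (q.2 : ℤ) ^ 2 := by
    rintro ⟨d, e⟩ hq
    obtain ⟨rfl, hn⟩ := Nat.mem_divisorsAntidiagonal.1 hq
    have hd : 0 < d := Nat.pos_of_ne_zero (left_ne_zero_of_mul hn)
    rw [sum_const, Nat.card_Ico, nsmul_eq_mul, Nat.cast_pred hd]
    push_cast
    ring
  calc
    _ = ∑ p ∈ pairSolutions n with p.2.1 = p.2.2, (p.2.1 : ℤ) ^ 2 := by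
      simp only [sum_filter]
      exact sum_pairSolutions_swap n fun p ↦ if p.2.1 = p.2.2 then (p.2.1 : ℤ) ^ 2 else 0
    _ = ∑ q ∈ n.divisorsAntidiagonal, (n * q.2 - (q.2 : ℤ) ^ 2) := by
      rw [sum_pairSolutions_snd_eq n fun p ↦ (p.2.1 : ℤ) ^ 2, sum_congr rfl hterm]
    _ = n * σ 1 n - σ 2 n := by
      rw [Nat.sum_divisorsAntidiagonal' fun _ e ↦ (n : ℤ) * e - (e : ℤ) ^ 2, sum_sub_distrib,
        ← mul_sum]
      simp [ArithmeticFunction.sigma_apply]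

theorem twelve_mul_sum_pairSolutions_mul (n : ℕ) :
    12 * ∑ p ∈ pairSolutions n, (p.1.1 * p.1.2 : ℤ) = 5 * σ 3 n + (1 - 6 * n) * σ 1 n := by
  let g (a b : ℕ) : ℤ := a ^ 2 - a * b + b ^ 2
  have hg (a b : ℕ) : g (a + b) b = g a (a + b) := by simp only [g]; push_cast; ring
  have hdiff : ∑ p ∈ pairSolutions n, (g p.1.1 (p.1.1 + p.1.2) - g p.1.1 p.1.2) =
      2 * ∑ p ∈ pairSolutions n, (p.1.1 * p.1.2 : ℤ) := by
    rw [mul_sum]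
    exact sum_congr rfl fun p _ ↦ by simp only [g]; push_cast; ring
  have hsnd : ∑ p ∈ pairSolutions n with p.2.1 = p.2.2, g p.1.1 (p.1.1 + p.1.2) =
      ∑ p ∈ pairSolutions n with p.2.1 = p.2.2, ((p.1.1 : ℤ) + p.1.2) ^ 2 -
        ∑ p ∈ pairSolutions n with p.2.1 = p.2.2, (p.1.1 * p.1.2 : ℤ) := by
    rw [← sum_sub_distrib]
    exact sum_congr rfl fun p _ ↦ by simp only [g]; push_cast; ring
  have hfst : ∑ p ∈ pairSolutions n with p.1.1 = p.1.2, g p.1.1 p.1.2 =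
      ∑ p ∈ pairSolutions n with p.1.1 = p.1.2, (p.1.1 : ℤ) ^ 2 :=
    sum_congr rfl fun p hp ↦ by simp only [g, ← (mem_filter.1 hp).2]; ring
  have hmain := sum_pairSolutions_apply_add_sub n g hg
  rw [hdiff, hsnd, hfst, sum_pairSolutions_snd_eq_add_sq, sum_pairSolutions_fst_eq_sq] at hmain
  linear_combination 6 * hmain - six_mul_sum_pairSolutions_snd_eq_mul n

theorem macMahonM_one_eq_sigma (n : ℕ) : MacMahonM 1 n = σ 1 n := by
  rw [ArithmeticFunction.sigma_one_apply, ← Nat.sum_divisorsAntidiagonal fun d _ ↦ d, MacMahonM]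
  refine sum_bij' (fun p _ ↦ (p.1 0, p.2 0)) (fun q _ ↦ (fun _ ↦ q.1, fun _ ↦ q.2))
    ?_ ?_ ?_ ?_ ?_
  · rintro ⟨m, s⟩ hp
    simp only [mem_filter, mem_product, Fintype.mem_piFinset, mem_Icc, Fin.sum_univ_one] at hp
    obtain ⟨⟨hm, -⟩, -, h⟩ := hp
    have hn : n ≠ 0 := by have := hm 0; omega
    exact Nat.mem_divisorsAntidiagonal.2 ⟨h, hn⟩
  · rintro ⟨d, e⟩ hq
    have hd := Nat.fst_mem_divisors_of_mem_antidiagonal hq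
    have he := Nat.snd_mem_divisors_of_mem_antidiagonal hq
    simp only [mem_filter, mem_product, Fintype.mem_piFinset, mem_Icc, Fin.sum_univ_one]
    exact ⟨⟨fun _ ↦ ⟨Nat.pos_of_mem_divisors hd, Nat.divisor_le hd⟩,
      fun _ ↦ ⟨Nat.pos_of_mem_divisors he, Nat.divisor_le he⟩⟩, fun i j hij ↦ by omega,
      (Nat.mem_divisorsAntidiagonal.1 hq).1⟩
  · rintro ⟨m, s⟩ _
    ext i <;> simp [Subsingleton.elim i 0]
  · exact fun _ _ ↦ rfl
  · exact fun _ _ ↦ Fin.prod_univ_one _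

theorem macMahonM_two_eq_sum_pairSolutions (n : ℕ) :
    MacMahonM 2 n = ∑ p ∈ pairSolutions n with p.2.1 < p.2.2, p.1.1 * p.1.2 := by
  refine sum_equiv ((finTwoArrowEquiv ℕ).prodCongr (finTwoArrowEquiv ℕ)) ?_ ?_
  · simp only [pairSolutions, mem_filter, mem_product, Fintype.mem_piFinset, Fin.forall_fin_two,
      Fin.sum_univ_two, Prod.forall, Equiv.prodCongr_apply, Prod.map, finTwoArrowEquiv_apply,
      Equiv.toFun_as_coe, piFinTwoEquiv_apply]
    grind
  · simp [Fin.prod_univ_two]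

theorem sum_pairSolutions_mul_eq_two_mul_macMahonM_two_add (n : ℕ) :
    ∑ p ∈ pairSolutions n, p.1.1 * p.1.2 =
      2 * MacMahonM 2 n + ∑ p ∈ pairSolutions n with p.2.1 = p.2.2, p.1.1 * p.1.2 := by
  have hswap : ∑ p ∈ pairSolutions n with p.2.2 < p.2.1, p.1.1 * p.1.2 = MacMahonM 2 n := by
    rw [macMahonM_two_eq_sum_pairSolutions, sum_filter, sum_filter, ← sum_pairSolutions_map_swap]
    simp only [Prod.fst_swap, Prod.snd_swap, mul_comm]
  rw [← sum_filter_lt_add_gt_add_eq _ (fun p ↦ p.2.1) (fun p ↦ p.2.2), hswap,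
    ← macMahonM_two_eq_sum_pairSolutions, two_mul]

theorem eight_mul_macMahonM_two (n : ℕ) :
    8 * (MacMahonM 2 n : ℤ) = σ 3 n + (1 - 2 * n) * σ 1 n := by
  have hsplit := congrArg (Nat.cast : ℕ → ℤ)
    (sum_pairSolutions_mul_eq_two_mul_macMahonM_two_add n)
  push_cast at hsplit
  linarith [twelve_mul_sum_pairSolutions_mul n, six_mul_sum_pairSolutions_snd_eq_mul n]

theorem sum_properDivisors_erase_one_mul_sub_sq {n : ℕ} (hn : 1 < n) :
    ∑ d ∈ n.properDivisors.erase 1, (d : ℤ) * (n ^ 2 - n + 1 - d ^ 2) =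
      ((n : ℤ) ^ 2 - n + 1) * σ 1 n - σ 3 n := by
  have hdivisors : ∑ d ∈ n.divisors, (d : ℤ) * (n ^ 2 - n + 1 - d ^ 2) =
      ((n : ℤ) ^ 2 - n + 1) * σ 1 n - σ 3 n := by
    simp only [ArithmeticFunction.sigma_apply, Nat.cast_sum, mul_sum, ← sum_sub_distrib]
    exact sum_congr rfl fun d _ ↦ by push_cast; ring
  rw [← hdivisors, ← Nat.cons_self_properDivisors (by omega), sum_cons,
    ← sum_erase_add _ _ (Nat.one_mem_properDivisors_iff_one_lt.2 hn)]
  push_cast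
  ring

theorem mul_sub_sq_pos_of_mem_properDivisors {n d : ℕ} (hd : d ∈ n.properDivisors) :
    0 < (d : ℤ) * (n ^ 2 - n + 1 - d ^ 2) := by
  have hdpos : (1 : ℤ) ≤ d := by exact_mod_cast Nat.pos_of_mem_properDivisors hd
  have hdn : (d : ℤ) + 1 ≤ n := by exact_mod_cast (Nat.mem_properDivisors.1 hd).2
  exact mul_pos (by linarith) (by nlinarith)

theorem properDivisors_erase_one_eq_empty_iff {n : ℕ} (hn : 1 < n) :
    n.properDivisors.erase 1 = ∅ ↔ n.Prime := by
  have hne : n.properDivisors ≠ ∅ :=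
    ne_empty_of_mem (Nat.one_mem_properDivisors_iff_one_lt.2 hn)
  rw [erase_eq_empty_iff, or_iff_right hne, Nat.properDivisors_eq_singleton_one_iff_prime]

theorem prime_detect_M1_M2 (n : ℕ) (hn : 2 ≤ n) :
    ((n : ℤ) ^ 2 - 3 * n + 2) * MacMahonM 1 n - 8 * MacMahonM 2 n ≥ 0 ∧
      (((n : ℤ) ^ 2 - 3 * n + 2) * MacMahonM 1 n - 8 * MacMahonM 2 n = 0 ↔ n.Prime) := by
  have key : ((n : ℤ) ^ 2 - 3 * n + 2) * MacMahonM 1 n - 8 * MacMahonM 2 n =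
      ∑ d ∈ n.properDivisors.erase 1, (d : ℤ) * (n ^ 2 - n + 1 - d ^ 2) := by
    rw [sum_properDivisors_erase_one_mul_sub_sq hn, eight_mul_macMahonM_two, macMahonM_one_eq_sigma]
    ring
  have hpos : ∀ d ∈ n.properDivisors.erase 1, 0 < (d : ℤ) * (n ^ 2 - n + 1 - d ^ 2) :=
    fun d hd ↦ mul_sub_sq_pos_of_mem_properDivisors (mem_of_mem_erase hd)
  rw [key, ← properDivisors_erase_one_eq_empty_iff hn]
  refine ⟨sum_nonneg fun d hd ↦ (hpos d hd).le, fun hzero ↦ ?_, fun hempty ↦ by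
    rw [hempty, sum_empty]⟩
  by_contra hne
  exact (sum_pos hpos (nonempty_iff_ne_empty.2 hne)).ne' hzero
end

section
/- For every integer n ≥ 2, the inequality (3n³ − 13n² + 18n − 8)·M_1(n) + (12n² − 120n + 212)·M_2(n) − 960·M_3(n) ≥ 0 holds, with equality if and only if n is prime. -/
/-!
The generating function of `M_a` is the elementary symmetric function of degree `a` in the series
`q^s / (1 - q^s)^2`, `s ≥ 1`, whose power sums have coefficients
`∑ d ∣ n, (d + j - 1).choose (2 * j - 1)`. Newton's identities therefore write `M_1`, `M_2`, `M_3`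
as polynomials in the divisor sum series `S_k = ∑ σ_k(n) q^n`, `k = 1, 3, 5`. Ramanujan's formulas
for `S_1 ^ 2` and `S_1 * S_3`, which follow from Liouville's elementary summation identity, make
these polynomials linear in `σ_1(n), σ_3(n), σ_5(n)` over `ℚ[n]`, and twice the combination in the
theorem becomes `3 ∑ d ∣ n, d (d² - 1) (n² - d²)`. Its terms are nonnegative, and they all vanish
exactly when every divisor of `n` is `1` or `n`.
-/

open Finset hiding mk
open PowerSeries
open scoped ArithmeticFunction.sigma

/-! ### Newton's identities for MacMahon's series -/

theorem mk_natCast_pow (R : Type*) [CommRing R] (j : ℕ) :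
    (mk fun n => (n : R)) ^ (j + 1) = mk fun n => ((n + j).choose (2 * j + 1) : R) := by
  have h : (mk fun n => (n : R)) = X * mk 1 ^ 2 := by
    rw [mk_one_pow_eq_mk_choose_add R 1]
    ext (_ | n)
    · simp
    · simp [coeff_succ_X_mul, add_comm]
  rw [h, mul_pow, ← pow_mul, show 2 * (j + 1) = 2 * j + 1 + 1 by ring,
    mk_one_pow_eq_mk_choose_add]
  ext n
  rw [coeff_X_pow_mul', coeff_mk, coeff_mk]
  split_ifs with hn
  · congr 2
    omega
  · rw [Nat.choose_eq_zero_of_lt (by omega), Nat.cast_zero]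

/-- The series `q^s / (1 - q^s)^2 = ∑ m, m * q^(m * s)` recording a part `s = i + 1` with
multiplicity `m`; the shift makes the parts up to `N` indexed by `Fin N`. -/
noncomputable def partSeries (i : ℕ) : ℤ⟦X⟧ :=
  (mk fun m => (m : ℤ)).expand (i + 1) i.succ_ne_zero

theorem coeff_partSeries_pow (i j n : ℕ) :
    coeff n (partSeries i ^ (j + 1)) =
      if i + 1 ∣ n then ((n / (i + 1) + j).choose (2 * j + 1) : ℤ) else 0 := by
  rw [partSeries, ← map_pow, mk_natCast_pow, coeff_expand, coeff_mk]

theorem sum_fin_dvd_eq_sum_divisors {M : Type*} [AddCommMonoid M] {n N : ℕ} (hn : n ≠ 0)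
    (h : n ≤ N) (f : ℕ → M) :
    ∑ i : Fin N, (if (i : ℕ) + 1 ∣ n then f (i + 1) else 0) = ∑ d ∈ n.divisors, f d := by
  have hdiv : n.divisors = {d ∈ Ico (0 + 1) (N + 1) | d ∣ n} := by
    ext d
    have := Nat.le_of_dvd (m := d) (Nat.pos_of_ne_zero hn)
    have := Nat.pos_of_dvd_of_pos (m := d) (n := n)
    simp only [mem_filter, mem_Ico, Nat.mem_divisors]
    grind
  rw [hdiv, sum_filter, ← sum_Ico_add' (fun d => if d ∣ n then f d else 0), ← range_eq_Ico,
    Fin.sum_univ_eq_sum_range fun i => if i + 1 ∣ n then f (i + 1) else 0]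

theorem coeff_sum_partSeries_pow {n N : ℕ} (h : n ≤ N) (j : ℕ) :
    coeff n (∑ i : Fin N, partSeries i ^ (j + 1)) =
      ∑ d ∈ n.divisors, ((d + j).choose (2 * j + 1) : ℤ) := by
  simp only [map_sum, coeff_partSeries_pow]
  rcases eq_or_ne n 0 with rfl | hn
  · simp [Nat.choose_eq_zero_of_lt (show j < 2 * j + 1 by omega)]
  · rw [sum_fin_dvd_eq_sum_divisors hn h fun d => ((n / d + j).choose (2 * j + 1) : ℤ)]
    exact Nat.sum_div_divisors n fun d => ((d + j).choose (2 * j + 1) : ℤ)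

theorem sum_powersetCard_univ_prod {ι M : Type*} [LinearOrder ι] [Fintype ι] [CommSemiring M]
    (a : ℕ) (f : ι → M) :
    ∑ t ∈ powersetCard a univ, ∏ i ∈ t, f i = ∑ e : Fin a ↪o ι, ∏ j, f (e j) := by
  symm
  refine sum_bij' (fun e _ => univ.map e.toEmbedding)
    (fun t ht => t.orderEmbOfFin (mem_powersetCard.1 ht).2) ?_ ?_ ?_ ?_ ?_
  · simp
  · simp
  · intro e _
    exact (orderEmbOfFin_unique' _ (by simp)).symm
  · simp
  · simp

theorem coeff_partSeries (i n : ℕ) :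
    coeff n (partSeries i) = if i + 1 ∣ n then ((n / (i + 1) : ℕ) : ℤ) else 0 := by
  rw [partSeries, coeff_expand, coeff_mk]

theorem coeff_prod_partSeries {ι : Type*} [Fintype ι] [DecidableEq ι] (s : ι → ℕ) (n : ℕ) :
    coeff n (∏ i, partSeries (s i)) =
      ∑ m ∈ Fintype.piFinset fun _ : ι => Icc 1 n with ∑ i, m i * (s i + 1) = n,
        ∏ i, (m i : ℤ) := by
  rw [coeff_prod]
  symm
  refine sum_of_injOn (fun m => Finsupp.equivFunOnFinite.symm fun i => m i * (s i + 1)) ?_ ?_ ?_ ?_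
  · intro m _ m' _ h
    ext i
    simpa using DFunLike.congr_fun h i
  · intro m hm
    simpa using (mem_filter.1 hm).2
  · intro l hl hl'
    contrapose! hl'
    have hcoeff (i) : s i + 1 ∣ l i ∧ l i / (s i + 1) ≠ 0 := by
      have := prod_ne_zero_iff.1 hl' i (mem_univ i)
      rwa [coeff_partSeries, ite_ne_right_iff, Nat.cast_ne_zero] at this
    have hmul (i) : l i / (s i + 1) * (s i + 1) = l i := Nat.div_mul_cancel (hcoeff i).1
    have hsum : ∑ i, l i = n := (mem_finsuppAntidiag.1 hl).1
    refine ⟨fun i => l i / (s i + 1), ?_, ?_⟩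
    · simp only [coe_filter, Fintype.mem_piFinset, mem_Icc, Set.mem_ofPred_eq, hmul, hsum, and_true]
      intro i
      have hle : l i ≤ n := hsum ▸ single_le_sum_of_canonicallyOrdered (mem_univ i)
      exact ⟨Nat.pos_of_ne_zero (hcoeff i).2, (Nat.div_le_self _ _).trans hle⟩
    · ext i
      simp [hmul]
  · intro m _
    simp [coeff_partSeries]

theorem MacMahonM_eq_sum_orderEmbedding {n N : ℕ} (h : n ≤ N) (a : ℕ) :
    MacMahonM a n = ∑ e : Fin a ↪o Fin N,
      ∑ m ∈ Fintype.piFinset fun _ : Fin a => Icc 1 n with ∑ i, m i * ((e i : ℕ) + 1) = n,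
        ∏ i, m i := by
  rw [sum_sigma', MacMahonM]
  symm
  refine sum_nbij (fun p => (p.2, fun i => (p.1 i : ℕ) + 1)) ?_ ?_ ?_ ?_
  · rintro ⟨e, m⟩ hp
    simp only [mem_sigma, mem_univ, true_and, mem_filter, mem_product, Fintype.mem_piFinset,
      mem_Icc] at hp ⊢
    refine ⟨⟨hp.1, fun i => ⟨by omega, ?_⟩⟩, fun i j hij => by simpa using hij, hp.2⟩
    calc (e i : ℕ) + 1 ≤ m i * (e i + 1) := Nat.le_mul_of_pos_left _ (hp.1 i).1
      _ ≤ ∑ i, m i * ((e i : ℕ) + 1) :=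
        single_le_sum_of_canonicallyOrdered (f := fun i => m i * ((e i : ℕ) + 1)) (mem_univ i)
      _ = n := hp.2
  · rintro ⟨e, m⟩ - ⟨e', m'⟩ - heq
    obtain ⟨rfl, he⟩ := Prod.ext_iff.1 heq
    congr 1
    ext i
    simpa using congr_fun he i
  · rintro ⟨m, s⟩ hp
    simp only [coe_filter, mem_product, Fintype.mem_piFinset, mem_Icc, Set.mem_ofPred_eq] at hp
    obtain ⟨⟨hm, hs⟩, hmono, hsum⟩ := hp
    have hlt (i) : s i - 1 < N := by have := hs i; omega
    let e : Fin a ↪o Fin N := OrderEmbedding.ofStrictMono (fun i => ⟨s i - 1, hlt i⟩)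
      fun i j hij => Fin.mk_lt_mk.2 (Nat.sub_lt_sub_right (hs i).1 (hmono i j hij))
    have he (i) : (e i : ℕ) + 1 = s i := Nat.sub_add_cancel (hs i).1
    exact ⟨⟨e, m⟩, by simp [he, hm, hsum], by simp [he]⟩
  · simp

open MvPolynomial in
theorem coeff_aeval_esymm {n N : ℕ} (h : n ≤ N) (a : ℕ) :
    PowerSeries.coeff n (aeval (fun i : Fin N => partSeries i) (esymm (Fin N) ℤ a)) =
      MacMahonM a n := by
  simp only [esymm, map_sum, map_prod, aeval_X, sum_powersetCard_univ_prod]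
  simp only [coeff_prod_partSeries, MacMahonM_eq_sum_orderEmbedding h]
  push_cast
  rfl

/-- The generating function of MacMahon's `M_a`. -/
noncomputable def macMahonSeries (a : ℕ) : ℤ⟦X⟧ := mk fun n => (MacMahonM a n : ℤ)

/-- The `j`-th power sum, for `j ≥ 1`, of the series `partSeries i` over all `i`. -/
noncomputable def partPowerSumSeries (j : ℕ) : ℤ⟦X⟧ :=
  mk fun n => ∑ d ∈ n.divisors, ((d + j - 1).choose (2 * j - 1) : ℤ)

theorem quotient_mk_span_X_pow_eq_iff {R : Type*} [CommRing R] (N : ℕ) {f g : R⟦X⟧} :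
    Ideal.Quotient.mk (Ideal.span {X ^ N}) f = Ideal.Quotient.mk (Ideal.span {X ^ N}) g ↔
      ∀ n < N, coeff n f = coeff n g := by
  simp only [Ideal.Quotient.mk_eq_mk_iff_sub_mem, Ideal.mem_span_singleton, X_pow_dvd_iff,
    map_sub, sub_eq_zero]

theorem mul_macMahonSeries_eq_sum (k : ℕ) :
    (k : ℤ⟦X⟧) * macMahonSeries k = (-1) ^ (k + 1) *
      ∑ a ∈ antidiagonal k with a.1 < k,
        (-1) ^ a.1 * macMahonSeries a.1 * partPowerSumSeries a.2 := by
  ext n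
  set π := Ideal.Quotient.mk (Ideal.span {(X : ℤ⟦X⟧) ^ (n + 1)})
  set φ := MvPolynomial.aeval (R := ℤ) fun i : Fin n => partSeries i
  have hesymm (a : ℕ) : π (macMahonSeries a) = π (φ (MvPolynomial.esymm (Fin n) ℤ a)) :=
    (quotient_mk_span_X_pow_eq_iff _).2 fun i hi => by
      rw [coeff_aeval_esymm (Nat.lt_succ_iff.1 hi), macMahonSeries, coeff_mk]
  have hpsum {j : ℕ} (hj : 0 < j) :
      π (partPowerSumSeries j) = π (φ (MvPolynomial.psum (Fin n) ℤ j)) := by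
    obtain ⟨j, rfl⟩ := Nat.exists_eq_add_one.2 hj
    refine (quotient_mk_span_X_pow_eq_iff _).2 fun i hi => ?_
    simp only [φ, MvPolynomial.psum, map_sum, map_pow, MvPolynomial.aeval_X]
    rw [← map_sum, coeff_sum_partSeries_pow (Nat.lt_succ_iff.1 hi), partPowerSumSeries, coeff_mk]
    rfl
  refine (quotient_mk_span_X_pow_eq_iff (n + 1)).1 ?_ n n.lt_succ_self
  calc π (k * macMahonSeries k)
      = π (φ (k * MvPolynomial.esymm (Fin n) ℤ k)) := by
        simp only [map_mul, map_natCast, hesymm]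
    _ = π (φ ((-1) ^ (k + 1) * ∑ a ∈ antidiagonal k with a.1 < k, (-1) ^ a.1 *
          MvPolynomial.esymm (Fin n) ℤ a.1 * MvPolynomial.psum (Fin n) ℤ a.2)) := by
        rw [MvPolynomial.mul_esymm_eq_sum]
    _ = π ((-1) ^ (k + 1) * ∑ a ∈ antidiagonal k with a.1 < k,
          (-1) ^ a.1 * macMahonSeries a.1 * partPowerSumSeries a.2) := by
        simp only [map_mul, map_pow, map_neg, map_one, map_sum, hesymm]
        congr 1
        refine sum_congr rfl fun a ha => ?_
        rw [mem_filter, HasAntidiagonal.mem_antidiagonal] at ha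
        rw [hpsum (by omega)]

/-! ### Liouville's identity -/

/-- The representations `n = a * x + b * y` as a sum of two products of positive integers, with
`((a, x), (b, y))` as the encoding of the quadruple. -/
def twoProductReps (n : ℕ) : Finset ((ℕ × ℕ) × ℕ × ℕ) :=
  (antidiagonal n).biUnion fun k => k.1.divisorsAntidiagonal ×ˢ k.2.divisorsAntidiagonal

theorem mem_twoProductReps {n : ℕ} {t : (ℕ × ℕ) × ℕ × ℕ} :
    t ∈ twoProductReps n ↔ t.1.1 * t.1.2 + t.2.1 * t.2.2 = n ∧
      (0 < t.1.1 ∧ 0 < t.1.2) ∧ 0 < t.2.1 ∧ 0 < t.2.2 := by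
  simp [twoProductReps, pos_iff_ne_zero, and_assoc]

theorem sum_twoProductReps {R : Type*} [NonUnitalNonAssocSemiring R] (n : ℕ) (f g : ℕ × ℕ → R) :
    ∑ t ∈ twoProductReps n, f t.1 * g t.2 = ∑ k ∈ antidiagonal n,
      (∑ p ∈ k.1.divisorsAntidiagonal, f p) * ∑ p ∈ k.2.divisorsAntidiagonal, g p := by
  rw [twoProductReps, sum_biUnion]
  · simp only [sum_product, sum_mul_sum]
  · intro k _ l _ hkl
    refine disjoint_left.2 fun t hk hl => hkl ?_
    simp only [mem_product, Nat.mem_divisorsAntidiagonal] at hk hl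
    exact Prod.ext (hk.1.1.symm.trans hl.1.1) (hk.2.1.symm.trans hl.2.1)

section Liouville

variable {M : Type*} [AddCommMonoid M] (n : ℕ)

theorem sum_twoProductReps_filter_swap (p : (ℕ × ℕ) × ℕ × ℕ → Prop) [DecidablePred p]
    (f : (ℕ × ℕ) × ℕ × ℕ → M) :
    ∑ t ∈ twoProductReps n with p t.swap, f t.swap = ∑ t ∈ twoProductReps n with p t, f t := by
  refine sum_nbij' Prod.swap Prod.swap ?_ ?_ (fun _ _ => rfl) (fun _ _ => rfl) fun _ _ => rfl <;>
  · intro t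
    simp only [mem_filter, mem_twoProductReps, Prod.fst_swap, Prod.snd_swap, Prod.swap_swap]
    grind

-- The substitution is `a * x + b * y = (a - b) * x + b * (x + y)`.
theorem sum_twoProductReps_shear (f : (ℕ × ℕ) × ℕ × ℕ → M) :
    ∑ t ∈ twoProductReps n with t.2.1 < t.1.1,
        f ((t.1.1 - t.2.1, t.1.2), (t.2.1, t.1.2 + t.2.2)) =
      ∑ t ∈ twoProductReps n with t.1.2 < t.2.2, f t := by
  refine sum_nbij' (fun t => ((t.1.1 - t.2.1, t.1.2), (t.2.1, t.1.2 + t.2.2)))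
    (fun t => ((t.1.1 + t.2.1, t.1.2), (t.2.1, t.2.2 - t.1.2))) ?_ ?_ ?_ ?_ fun _ _ => rfl
  · rintro ⟨⟨a, x⟩, b, y⟩ ht
    simp only [mem_filter, mem_twoProductReps] at ht ⊢
    obtain ⟨c, rfl⟩ := Nat.exists_eq_add_of_lt ht.2
    refine ⟨⟨?_, by omega⟩, by omega⟩
    rw [← ht.1.1, show b + c + 1 - b = c + 1 by omega]
    ring
  · rintro ⟨⟨a, x⟩, b, y⟩ ht
    simp only [mem_filter, mem_twoProductReps] at ht ⊢
    obtain ⟨c, rfl⟩ := Nat.exists_eq_add_of_lt ht.2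
    refine ⟨⟨?_, by omega⟩, by omega⟩
    rw [← ht.1.1, show x + c + 1 - x = c + 1 by omega]
    ring
  · rintro ⟨⟨a, x⟩, b, y⟩ ht
    simp only [mem_filter] at ht
    simp [Nat.sub_add_cancel ht.2.le]
  · rintro ⟨⟨a, x⟩, b, y⟩ ht
    simp only [mem_filter] at ht
    simp [Nat.add_sub_cancel' ht.2.le]

theorem sum_twoProductReps_snd_eq (f : ℕ → ℕ → ℕ → M) :
    ∑ t ∈ twoProductReps n with t.1.2 = t.2.2, f t.1.1 t.2.1 t.1.2 =
      ∑ p ∈ n.divisorsAntidiagonal, ∑ l ∈ Ico 1 p.1, f l (p.1 - l) p.2 := by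
  rw [sum_sigma']
  refine sum_nbij' (fun t => ⟨(t.1.1 + t.2.1, t.1.2), t.1.1⟩)
    (fun q => ((q.2, q.1.2), (q.1.1 - q.2, q.1.2))) ?_ ?_ ?_ ?_ ?_
  · rintro ⟨⟨a, x⟩, b, y⟩ ht
    simp only [mem_filter, mem_twoProductReps] at ht
    obtain ⟨⟨rfl, hpos⟩, rfl⟩ := ht
    simp only [mem_sigma, Nat.mem_divisorsAntidiagonal, mem_Ico, add_mul, true_and]
    have := Nat.mul_pos hpos.1.1 hpos.1.2
    omega
  · rintro ⟨⟨d, e⟩, l⟩ hq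
    simp only [mem_sigma, Nat.mem_divisorsAntidiagonal, mem_Ico] at hq
    obtain ⟨⟨rfl, h0⟩, hl⟩ := hq
    simp only [mem_filter, mem_twoProductReps, ← add_mul, and_true]
    have := Nat.pos_of_ne_zero (right_ne_zero_of_mul h0)
    exact ⟨by rw [Nat.add_sub_cancel' hl.2.le], by omega⟩
  · rintro ⟨⟨a, x⟩, b, y⟩ ht
    simp only [mem_filter] at ht
    simp [ht.2]
  · rintro ⟨⟨d, e⟩, l⟩ hq
    simp only [mem_sigma, mem_Ico] at hq
    simp [Nat.add_sub_cancel' hq.2.2.le]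
  · intro t _
    simp

theorem sum_twoProductReps_fst_eq (f : ℕ → M) :
    ∑ t ∈ twoProductReps n with t.1.1 = t.2.1, f t.1.1 =
      ∑ p ∈ n.divisorsAntidiagonal, (p.2 - 1) • f p.1 := by
  calc ∑ t ∈ twoProductReps n with t.1.1 = t.2.1, f t.1.1
      = ∑ t ∈ twoProductReps n with t.1.2 = t.2.2, f t.1.2 := by
        refine sum_nbij' (Prod.map Prod.swap Prod.swap) (Prod.map Prod.swap Prod.swap) ?_ ?_
          (fun _ _ => rfl) (fun _ _ => rfl) fun _ _ => rfl <;>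
        · intro t
          simp only [mem_filter, mem_twoProductReps, Prod.map_fst, Prod.map_snd, Prod.fst_swap,
            Prod.snd_swap]
          grind
    _ = ∑ p ∈ n.divisorsAntidiagonal, (p.1 - 1) • f p.2 := by
        simp only [sum_twoProductReps_snd_eq n fun _ _ e => f e, sum_const, Nat.card_Ico]
    _ = ∑ p ∈ n.divisorsAntidiagonal, (p.2 - 1) • f p.1 := by
        conv_rhs => rw [← Nat.map_swap_divisorsAntidiagonal, sum_map]
        rfl

theorem sum_filter_lt_add_eq_add_gt {ι α : Type*} [LinearOrder α] (s : Finset ι) (u v : ι → α)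
    (f : ι → M) :
    ∑ i ∈ s with u i < v i, f i + ∑ i ∈ s with u i = v i, f i + ∑ i ∈ s with v i < u i, f i =
      ∑ i ∈ s, f i := by
  simp only [sum_filter, ← sum_add_distrib]
  refine sum_congr rfl fun i _ => ?_
  rcases lt_trichotomy (u i) (v i) with h | h | h
  · simp [h, h.ne, h.not_gt]
  · simp [h]
  · simp [h, h.ne', h.not_gt]

variable {R : Type*} [CommRing R]

theorem sum_twoProductReps_snd_lt_sub_fst_gt (f : ℕ → R) :
    ∑ t ∈ twoProductReps n with t.1.2 < t.2.2, f t.1.1 -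
        ∑ t ∈ twoProductReps n with t.2.1 < t.1.1, f t.1.1 =
      ∑ t ∈ twoProductReps n with t.1.1 = t.2.1, f t.1.1 -
        ∑ t ∈ twoProductReps n with t.1.2 = t.2.2, f t.1.1 := by
  have hparts := sum_filter_lt_add_eq_add_gt (twoProductReps n)
    (fun t => t.1.1) (fun t => t.2.1) fun t => f t.1.1
  have hmults := sum_filter_lt_add_eq_add_gt (twoProductReps n)
    (fun t => t.1.2) (fun t => t.2.2) fun t => f t.1.1
  have hshear : ∑ t ∈ twoProductReps n with t.1.1 < t.2.1, f t.1.1 =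
      ∑ t ∈ twoProductReps n with t.2.2 < t.1.2, f t.1.1 := by
    calc ∑ t ∈ twoProductReps n with t.1.1 < t.2.1, f t.1.1
        = ∑ t ∈ twoProductReps n with t.2.1 < t.1.1, f t.2.1 :=
          sum_twoProductReps_filter_swap n (fun t => t.2.1 < t.1.1) fun t => f t.2.1
      _ = ∑ t ∈ twoProductReps n with t.1.2 < t.2.2, f t.2.1 :=
          sum_twoProductReps_shear n fun t => f t.2.1
      _ = ∑ t ∈ twoProductReps n with t.2.2 < t.1.2, f t.1.1 :=
          sum_twoProductReps_filter_swap n (fun t => t.2.2 < t.1.2) fun t => f t.1.1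
  linear_combination hmults - hparts + hshear

theorem sum_twoProductReps_apply_sub {F : ℤ → R} (hF : ∀ z, F (-z) = F z) :
    ∑ t ∈ twoProductReps n, F (t.1.1 - t.2.1) =
      2 * ∑ t ∈ twoProductReps n with t.1.2 < t.2.2, F t.1.1 +
        ∑ t ∈ twoProductReps n with t.1.1 = t.2.1, F 0 := by
  have hlt : ∑ t ∈ twoProductReps n with t.1.1 < t.2.1, F (t.1.1 - t.2.1) =
      ∑ t ∈ twoProductReps n with t.2.1 < t.1.1, F (t.1.1 - t.2.1) := by
    rw [← sum_twoProductReps_filter_swap]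
    refine sum_congr rfl fun t _ => ?_
    rw [← hF, neg_sub]
    rfl
  have hgt : ∑ t ∈ twoProductReps n with t.2.1 < t.1.1, F (t.1.1 - t.2.1) =
      ∑ t ∈ twoProductReps n with t.1.2 < t.2.2, F t.1.1 := by
    rw [← sum_twoProductReps_shear]
    refine sum_congr rfl fun t ht => ?_
    rw [Nat.cast_sub (mem_filter.1 ht).2.le]
  have heq : ∑ t ∈ twoProductReps n with t.1.1 = t.2.1, F (t.1.1 - t.2.1) =
      ∑ t ∈ twoProductReps n with t.1.1 = t.2.1, F 0 :=
    sum_congr rfl fun t ht => by rw [(mem_filter.1 ht).2, sub_self]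
  rw [← sum_filter_lt_add_eq_add_gt _ (fun t => t.1.1) fun t => t.2.1]
  linear_combination hlt + 2 * hgt + heq

theorem sum_twoProductReps_apply_add (f : ℕ → R) :
    ∑ t ∈ twoProductReps n, f (t.1.1 + t.2.1) =
      2 * ∑ t ∈ twoProductReps n with t.2.1 < t.1.1, f t.1.1 +
        ∑ t ∈ twoProductReps n with t.1.2 = t.2.2, f (t.1.1 + t.2.1) := by
  have hgt : ∑ t ∈ twoProductReps n with t.2.2 < t.1.2, f (t.1.1 + t.2.1) =
      ∑ t ∈ twoProductReps n with t.1.2 < t.2.2, f (t.1.1 + t.2.1) := by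
    rw [← sum_twoProductReps_filter_swap]
    refine sum_congr rfl fun t _ => ?_
    rw [add_comm]
    rfl
  have hlt : ∑ t ∈ twoProductReps n with t.1.2 < t.2.2, f (t.1.1 + t.2.1) =
      ∑ t ∈ twoProductReps n with t.2.1 < t.1.1, f t.1.1 := by
    rw [← sum_twoProductReps_shear]
    refine sum_congr rfl fun t ht => ?_
    rw [Nat.sub_add_cancel (mem_filter.1 ht).2.le]
  rw [← sum_filter_lt_add_eq_add_gt _ (fun t => t.1.2) fun t => t.2.2]
  linear_combination hgt + 2 * hlt

theorem liouville_identity {F : ℤ → R} (hF : ∀ z, F (-z) = F z) :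
    ∑ t ∈ twoProductReps n, (F (t.1.1 - t.2.1) - F (t.1.1 + t.2.1)) =
      ∑ p ∈ n.divisorsAntidiagonal,
        ((p.2 + 1) * F 0 + (2 * p.2 - p.1 - 1) * F p.1 - 2 * ∑ l ∈ range p.1, F l) := by
  have hfst (f : ℕ → R) := sum_twoProductReps_fst_eq n f
  have hsnd := sum_twoProductReps_snd_eq n fun a _ _ => F a
  have hsnd_add : ∑ t ∈ twoProductReps n with t.1.2 = t.2.2, F (t.1.1 + t.2.1) =
      ∑ p ∈ n.divisorsAntidiagonal, (p.1 - 1) • F p.1 := by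
    rw [sum_twoProductReps_snd_eq n fun a b _ => F (a + b)]
    refine sum_congr rfl fun p _ => ?_
    rw [← Nat.card_Ico 1 p.1, ← sum_const]
    refine sum_congr rfl fun l hl => ?_
    rw [← Nat.cast_add, Nat.add_sub_cancel' (mem_Ico.1 hl).2.le]
  have hdiff := sum_twoProductReps_snd_lt_sub_fst_gt n fun a => F a
  have hadd := sum_twoProductReps_apply_add n fun a => F a
  push_cast at hadd
  rw [sum_sub_distrib, sum_twoProductReps_apply_sub n hF, hadd,
    add_sub_add_comm, ← mul_sub, hdiff, hfst fun a => F a, hfst fun _ => F 0, hsnd, hsnd_add,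
    ← sum_sub_distrib, ← sum_sub_distrib, mul_sum, ← sum_add_distrib]
  refine sum_congr rfl fun p hp => ?_
  have hne := (Nat.mem_divisorsAntidiagonal.1 hp).1.trans_ne (Nat.mem_divisorsAntidiagonal.1 hp).2
  have hfst_pos := Nat.pos_of_ne_zero (left_ne_zero_of_mul hne)
  have hsnd_pos := Nat.pos_of_ne_zero (right_ne_zero_of_mul hne)
  rw [sum_range_eq_add_Ico _ hfst_pos]
  simp only [nsmul_eq_mul, Nat.cast_sub hfst_pos, Nat.cast_sub hsnd_pos]
  push_cast
  ring

end Liouville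

/-! ### Ramanujan's formulas -/

theorem sum_range_sq (R : Type*) [CommRing R] (d : ℕ) :
    6 * ∑ l ∈ range d, (l : R) ^ 2 = d * (d - 1) * (2 * d - 1) := by
  induction d with
  | zero => simp
  | succ d ih =>
    rw [sum_range_succ, mul_add, ih]
    push_cast
    ring

theorem sum_range_pow_four (R : Type*) [CommRing R] (d : ℕ) :
    30 * ∑ l ∈ range d, (l : R) ^ 4 = d * (d - 1) * (2 * d - 1) * (3 * d ^ 2 - 3 * d - 1) := by
  induction d with
  | zero => simp
  | succ d ih =>
    rw [sum_range_succ, mul_add, ih]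
    push_cast
    ring

/-- The generating function of `σ k`: for odd `k`, the Eisenstein series of weight `k + 1` up to an
affine normalization that removes the constant term. -/
noncomputable def sigmaSeries (k : ℕ) : ℤ⟦X⟧ := mk fun n => (σ k n : ℤ)

theorem coeff_sigmaSeries (k n : ℕ) : coeff n (sigmaSeries k) = σ k n := coeff_mk _ _

theorem coeff_sigmaSeries_eq_sum (k n : ℕ) :
    coeff n (sigmaSeries k) = ∑ p ∈ n.divisorsAntidiagonal, (p.1 : ℤ) ^ k := by
  rw [coeff_sigmaSeries, ArithmeticFunction.sigma_apply,
    ← Nat.sum_divisorsAntidiagonal fun d _ => d ^ k]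
  push_cast
  rfl

theorem coeff_sigmaSeries_mul (i j n : ℕ) :
    coeff n (sigmaSeries i * sigmaSeries j) =
      ∑ t ∈ twoProductReps n, (t.1.1 : ℤ) ^ i * (t.2.1 : ℤ) ^ j := by
  simp only [coeff_mul, coeff_sigmaSeries_eq_sum]
  exact (sum_twoProductReps n (fun p => (p.1 : ℤ) ^ i) fun p => (p.1 : ℤ) ^ j).symm

theorem coeff_ofNat_mul {R : Type*} [Semiring R] (k n : ℕ) [k.AtLeastTwo] (f : R⟦X⟧) :
    coeff n (ofNat(k) * f) = ofNat(k) * coeff n f := by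
  rw [← map_ofNat (C (R := R)) k, coeff_C_mul]

theorem coeff_X_mul_derivative {R : Type*} [CommSemiring R] (n : ℕ) (f : R⟦X⟧) :
    coeff n (X * d⁄dX R f) = n * coeff n f := by
  cases n with
  | zero => simp
  | succ n => rw [coeff_succ_X_mul, coeff_derivative, mul_comm, Nat.cast_succ]

theorem coeff_X_mul_derivative_sigmaSeries (k n : ℕ) :
    coeff n (X * d⁄dX ℤ (sigmaSeries k)) =
      ∑ p ∈ n.divisorsAntidiagonal, (p.2 : ℤ) * (p.1 : ℤ) ^ (k + 1) := by
  rw [coeff_X_mul_derivative, coeff_sigmaSeries_eq_sum, mul_sum]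
  refine sum_congr rfl fun p hp => ?_
  rw [← (Nat.mem_divisorsAntidiagonal.1 hp).1]
  push_cast
  ring

theorem sigmaSeries_one_sq :
    12 * sigmaSeries 1 ^ 2 =
      5 * sigmaSeries 3 + sigmaSeries 1 - 6 * (X * d⁄dX ℤ (sigmaSeries 1)) := by
  ext n
  calc coeff n (12 * sigmaSeries 1 ^ 2)
      = -3 * ∑ t ∈ twoProductReps n, ((t.1.1 - t.2.1 : ℤ) ^ 2 - (t.1.1 + t.2.1 : ℤ) ^ 2) := by
        rw [sq (sigmaSeries 1), coeff_ofNat_mul, coeff_sigmaSeries_mul, mul_sum, mul_sum]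
        exact sum_congr rfl fun t _ => by ring
    _ = ∑ p ∈ n.divisorsAntidiagonal,
        (5 * (p.1 : ℤ) ^ 3 + (p.1 : ℤ) ^ 1 - 6 * (p.2 * (p.1 : ℤ) ^ (1 + 1))) := by
        rw [liouville_identity n (F := (· ^ 2)) neg_sq, mul_sum]
        refine sum_congr rfl fun p _ => ?_
        linear_combination sum_range_sq ℤ p.1
    _ = coeff n (5 * sigmaSeries 3 + sigmaSeries 1 - 6 * (X * d⁄dX ℤ (sigmaSeries 1))) := by
        simp only [map_sub, map_add, coeff_ofNat_mul, coeff_X_mul_derivative_sigmaSeries,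
          coeff_sigmaSeries_eq_sum, sum_sub_distrib, sum_add_distrib, mul_sum]

theorem sigmaSeries_one_mul_three :
    240 * (sigmaSeries 1 * sigmaSeries 3) =
      21 * sigmaSeries 5 + 10 * sigmaSeries 3 - sigmaSeries 1 -
        30 * (X * d⁄dX ℤ (sigmaSeries 3)) := by
  ext n
  calc coeff n (240 * (sigmaSeries 1 * sigmaSeries 3))
      = coeff n (120 * (sigmaSeries 1 * sigmaSeries 3 + sigmaSeries 3 * sigmaSeries 1)) := by
        ring_nf
    _ = -15 * ∑ t ∈ twoProductReps n, ((t.1.1 - t.2.1 : ℤ) ^ 4 - (t.1.1 + t.2.1 : ℤ) ^ 4) := by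
        rw [coeff_ofNat_mul, map_add, coeff_sigmaSeries_mul, coeff_sigmaSeries_mul,
          ← sum_add_distrib, mul_sum, mul_sum]
        exact sum_congr rfl fun t _ => by ring
    _ = ∑ p ∈ n.divisorsAntidiagonal, (21 * (p.1 : ℤ) ^ 5 + 10 * (p.1 : ℤ) ^ 3 -
          (p.1 : ℤ) ^ 1 - 30 * (p.2 * (p.1 : ℤ) ^ (3 + 1))) := by
        rw [liouville_identity n (F := (· ^ 4)) (even_two_mul 2).neg_pow, mul_sum]
        refine sum_congr rfl fun p _ => ?_
        linear_combination sum_range_pow_four ℤ p.1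
    _ = coeff n (21 * sigmaSeries 5 + 10 * sigmaSeries 3 - sigmaSeries 1 -
          30 * (X * d⁄dX ℤ (sigmaSeries 3))) := by
        simp only [map_sub, map_add, coeff_ofNat_mul, coeff_X_mul_derivative_sigmaSeries,
          coeff_sigmaSeries_eq_sum, sum_sub_distrib, sum_add_distrib, mul_sum]

theorem sigmaSeries_one_cube :
    12 * sigmaSeries 1 ^ 3 =
      5 * (sigmaSeries 1 * sigmaSeries 3) + sigmaSeries 1 ^ 2 -
        3 * (X * d⁄dX ℤ (sigmaSeries 1 ^ 2)) := by
  rw [Derivation.leibniz_pow]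
  simp only [smul_eq_mul, nsmul_eq_mul]
  push_cast
  linear_combination sigmaSeries 1 * sigmaSeries_one_sq

/-! ### `M_1`, `M_2` and `M_3` in terms of divisor sums -/

theorem add_one_choose_three (R : Type*) [CommRing R] (d : ℕ) :
    6 * ((d + 1).choose 3 : R) = d ^ 3 - d := by
  have h : (d + 1).descFactorial 3 = 6 * (d + 1).choose 3 :=
    Nat.descFactorial_eq_factorial_mul_choose (d + 1) 3
  rw [← Nat.cast_ofNat, ← Nat.cast_mul, ← h, ← descPochhammer_eval_eq_descFactorial]
  simp only [descPochhammer_succ_eval, descPochhammer_zero, Polynomial.eval_one]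
  push_cast
  ring

theorem add_two_choose_five (R : Type*) [CommRing R] (d : ℕ) :
    120 * ((d + 2).choose 5 : R) = d ^ 5 - 5 * d ^ 3 + 4 * d := by
  have h : (d + 2).descFactorial 5 = 120 * (d + 2).choose 5 :=
    Nat.descFactorial_eq_factorial_mul_choose (d + 2) 5
  rw [← Nat.cast_ofNat, ← Nat.cast_mul, ← h, ← descPochhammer_eval_eq_descFactorial]
  simp only [descPochhammer_succ_eval, descPochhammer_zero, Polynomial.eval_one]
  push_cast
  ring

theorem partPowerSumSeries_one : partPowerSumSeries 1 = sigmaSeries 1 := by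
  ext n
  simp [partPowerSumSeries, sigmaSeries, ArithmeticFunction.sigma_apply]

theorem partPowerSumSeries_two :
    6 * partPowerSumSeries 2 = sigmaSeries 3 - sigmaSeries 1 := by
  ext n
  rw [coeff_ofNat_mul, partPowerSumSeries, coeff_mk, mul_sum]
  refine (sum_congr rfl fun d _ => add_one_choose_three ℤ d).trans ?_
  simp [sigmaSeries, ArithmeticFunction.sigma_apply]

theorem partPowerSumSeries_three :
    120 * partPowerSumSeries 3 = sigmaSeries 5 - 5 * sigmaSeries 3 + 4 * sigmaSeries 1 := by
  ext n
  rw [coeff_ofNat_mul, partPowerSumSeries, coeff_mk, mul_sum]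
  refine (sum_congr rfl fun d _ => add_two_choose_five ℤ d).trans ?_
  simp [sigmaSeries, ArithmeticFunction.sigma_apply, sum_add_distrib, mul_sum, coeff_ofNat_mul]

theorem macMahonSeries_zero : macMahonSeries 0 = 1 := by
  ext n
  rw [macMahonSeries, coeff_mk, ← coeff_aeval_esymm le_rfl, MvPolynomial.esymm_zero, map_one]

theorem macMahonSeries_one : macMahonSeries 1 = sigmaSeries 1 := by
  have h := mul_macMahonSeries_eq_sum 1
  simpa [sum_filter, Nat.antidiagonal_succ, macMahonSeries_zero, partPowerSumSeries_one] using h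

theorem macMahonSeries_two :
    12 * macMahonSeries 2 = 6 * sigmaSeries 1 ^ 2 - sigmaSeries 3 + sigmaSeries 1 := by
  have newton : 2 * macMahonSeries 2 = sigmaSeries 1 ^ 2 - partPowerSumSeries 2 := by
    have h := mul_macMahonSeries_eq_sum 2
    rw [show {a ∈ antidiagonal 2 | a.1 < 2} = ({(0, 2), (1, 1)} : Finset (ℕ × ℕ)) from rfl,
      sum_pair (by decide)] at h
    push_cast [macMahonSeries_zero, macMahonSeries_one, partPowerSumSeries_one] at h
    linear_combination h
  linear_combination 6 * newton - partPowerSumSeries_two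

theorem macMahonSeries_three :
    360 * macMahonSeries 3 = 60 * sigmaSeries 1 ^ 3 - 30 * (sigmaSeries 1 * sigmaSeries 3) +
      30 * sigmaSeries 1 ^ 2 + sigmaSeries 5 - 5 * sigmaSeries 3 + 4 * sigmaSeries 1 := by
  have newton : 3 * macMahonSeries 3 = macMahonSeries 2 * sigmaSeries 1 -
      sigmaSeries 1 * partPowerSumSeries 2 + partPowerSumSeries 3 := by
    have h := mul_macMahonSeries_eq_sum 3
    rw [show {a ∈ antidiagonal 3 | a.1 < 3} = ({(0, 3), (1, 2), (2, 1)} : Finset (ℕ × ℕ)) from rfl,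
      sum_insert (by decide), sum_pair (by decide)] at h
    push_cast [macMahonSeries_zero, macMahonSeries_one, partPowerSumSeries_one] at h
    linear_combination h
  linear_combination 120 * newton + 10 * sigmaSeries 1 * macMahonSeries_two
    - 20 * sigmaSeries 1 * partPowerSumSeries_two + partPowerSumSeries_three

theorem MacMahonM_one (n : ℕ) : (MacMahonM 1 n : ℤ) = σ 1 n := by
  simpa [macMahonSeries, sigmaSeries] using congrArg (coeff n) macMahonSeries_one

theorem MacMahonM_two (n : ℕ) :
    8 * (MacMahonM 2 n : ℤ) = (1 - 2 * n) * σ 1 n + σ 3 n := by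
  have hM := congrArg (coeff n) macMahonSeries_two
  have hsq := congrArg (coeff n) sigmaSeries_one_sq
  simp only [map_add, map_sub, coeff_ofNat_mul, coeff_X_mul_derivative, macMahonSeries, coeff_mk,
    coeff_sigmaSeries] at hM hsq
  linarith

theorem MacMahonM_three (n : ℕ) :
    1920 * (MacMahonM 3 n : ℤ) =
      (40 * n ^ 2 - 100 * n + 37) * σ 1 n - (30 * n - 50) * σ 3 n + 3 * σ 5 n := by
  have hM := congrArg (coeff n) macMahonSeries_three
  have hsq := congrArg (coeff n) sigmaSeries_one_sq
  have hmul := congrArg (coeff n) sigmaSeries_one_mul_three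
  have hcube := congrArg (coeff n) sigmaSeries_one_cube
  simp only [map_add, map_sub, coeff_ofNat_mul, coeff_X_mul_derivative, macMahonSeries, coeff_mk,
    coeff_sigmaSeries] at hM hsq hmul hcube
  refine mul_left_cancel₀ (show (9 : ℤ) ≠ 0 by norm_num) ?_
  linear_combination 48 * hM + 240 * hcube + (140 - 60 * (n : ℤ)) * hsq - hmul

theorem macMahon_combination_eq_sum_divisors (n : ℕ) :
    2 * ((3 * (n : ℤ) ^ 3 - 13 * n ^ 2 + 18 * n - 8) * MacMahonM 1 n +
        (12 * (n : ℤ) ^ 2 - 120 * n + 212) * MacMahonM 2 n - 960 * MacMahonM 3 n) =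
      3 * ∑ d ∈ n.divisors, (d : ℤ) * (d ^ 2 - 1) * (n ^ 2 - d ^ 2) := by
  have hsum : ∑ d ∈ n.divisors, (d : ℤ) * (d ^ 2 - 1) * (n ^ 2 - d ^ 2) =
      ((n : ℤ) ^ 2 + 1) * σ 3 n - σ 5 n - n ^ 2 * σ 1 n := by
    simp only [ArithmeticFunction.sigma_apply, Nat.cast_sum, Nat.cast_pow, mul_sum,
      ← sum_sub_distrib]
    exact sum_congr rfl fun d _ => by ring
  rw [hsum, MacMahonM_one]
  linear_combination (3 * (n : ℤ) ^ 2 - 30 * n + 53) * MacMahonM_two n -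
    MacMahonM_three n

theorem mul_sq_sub_one_mul_sq_sub_sq_nonneg {d n : ℕ} (hd : d ≤ n) :
    0 ≤ (d : ℤ) * (d ^ 2 - 1) * (n ^ 2 - d ^ 2) := by
  rcases d.eq_zero_or_pos with rfl | hpos
  · simp
  · have hone : (0 : ℤ) ≤ d ^ 2 - 1 := sub_nonneg.2 (one_le_pow₀ (mod_cast hpos))
    have hsq : (0 : ℤ) ≤ n ^ 2 - d ^ 2 := sub_nonneg.2 (by gcongr)
    positivity

theorem sum_divisors_eq_zero_iff_prime {n : ℕ} (hn : 2 ≤ n) :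
    ∑ d ∈ n.divisors, (d : ℤ) * (d ^ 2 - 1) * (n ^ 2 - d ^ 2) = 0 ↔ n.Prime := by
  have hn0 : n ≠ 0 := by omega
  rw [sum_eq_zero_iff_of_nonneg fun d hd =>
    mul_sq_sub_one_mul_sq_sub_sq_nonneg (Nat.divisor_le hd), Nat.prime_def, and_iff_right hn]
  refine forall_congr' fun d => ?_
  rw [Nat.mem_divisors, and_iff_left hn0]
  refine imp_congr_right fun hd => ?_
  have hd0 : (d : ℤ) ≠ 0 := Nat.cast_ne_zero.2 (ne_zero_of_dvd_ne_zero hn0 hd)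
  rw [mul_eq_zero, mul_eq_zero, or_iff_right hd0, sub_eq_zero, sub_eq_zero]
  norm_cast
  rw [Nat.pow_eq_one, Nat.pow_left_inj two_ne_zero, or_iff_left two_ne_zero, eq_comm (a := n)]

theorem prime_detect_M1_M2_M3 (n : ℕ) (hn : 2 ≤ n) :
    (3 * (n : ℤ) ^ 3 - 13 * n ^ 2 + 18 * n - 8) * MacMahonM 1 n +
        (12 * (n : ℤ) ^ 2 - 120 * n + 212) * MacMahonM 2 n - 960 * MacMahonM 3 n ≥ 0 ∧
      ((3 * (n : ℤ) ^ 3 - 13 * n ^ 2 + 18 * n - 8) * MacMahonM 1 n +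
          (12 * (n : ℤ) ^ 2 - 120 * n + 212) * MacMahonM 2 n - 960 * MacMahonM 3 n = 0 ↔
        n.Prime) := by
  have h := macMahon_combination_eq_sum_divisors n
  have hnonneg := sum_nonneg fun d (hd : d ∈ n.divisors) =>
    mul_sq_sub_one_mul_sq_sub_sq_nonneg (Nat.divisor_le hd)
  rw [← sum_divisors_eq_zero_iff_prime hn]
  exact ⟨by linarith, fun hzero => by linarith, fun hzero => by linarith⟩
end
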